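/- Let G be a graph on n vertices and k ≥ 5 an integer. The sum of the weights w(D) over all good k-tuples D of vertices of G is at most 1. -/

import Mathlib

open Finset
open scoped Classical

/-- Index transposition swapping 0 and 1. -/
def swap01 (i : ℕ) : ℕ := if i = 0 then 1 else if i = 1 then 0 else i

/-- `y 0, y 1, …, y (k-1)` is an induced cycle of length `k` in `G`. -/
def IsInducedCycle {V : Type*} (G : SimpleGraph V) (k : ℕ) (y : ℕ → V) : Prop :=
  (∀ i < k, ∀ j < k, y i = y j → i = j) ∧
  ∀ i < k, ∀ j < k, (G.Adj (y i) (y j) ↔ (i + 1) % k = j ∨ (j + 1) % k = i)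

/-- `y 0, y 1, …, y (m-1)` is an induced path on `m` vertices in `G`. -/
def IsInducedPath {V : Type*} (G : SimpleGraph V) (m : ℕ) (y : ℕ → V) : Prop :=
  (∀ i < m, ∀ j < m, y i = y j → i = j) ∧
  ∀ i < m, ∀ j < m, (G.Adj (y i) (y j) ↔ i + 1 = j ∨ j + 1 = i)

/-- `(z 0, …, z (k-1))` is a good k-tuple: `z 1, z 0, z 2, …, z (k-1)` is an induced cycle. -/
def IsGoodTuple {V : Type*} (G : SimpleGraph V) (k : ℕ) (z : ℕ → V) : Prop :=
  IsInducedCycle G k (fun i => z (swap01 i))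

/-- The sequence `z 1, z 0, z 2, …, z (i-2), x` of length `i`. -/
def extSeq {V : Type*} (z : ℕ → V) (i : ℕ) (x : V) : ℕ → V :=
  fun p => if p = i - 1 then x else z (swap01 p)

/-- The quantity `n_i` associated with the (prefix of the) tuple `z`. -/
noncomputable def nq {V : Type*} (G : SimpleGraph V) (k : ℕ) (z : ℕ → V) (i : ℕ) : ℕ :=
  if i = 1 then Nat.card V
  else if i = 2 then Nat.card {x : V // G.Adj (z 0) x}
  else if i = 3 then Nat.card {x : V // G.Adj (z 0) x ∧ ¬ G.Adj (z 1) x}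
  else if i < k then Nat.card {x : V // IsInducedPath G i (extSeq z i x)}
  else Nat.card {x : V // IsInducedCycle G k (extSeq z k x)}

/-- The weight `w(D) = ∏_{i=1}^k 1/n_i` of a tuple. -/
noncomputable def wt {V : Type*} (G : SimpleGraph V) (k : ℕ) (z : ℕ → V) : ℝ :=
  ∏ i ∈ Finset.Icc 1 k, ((nq G k z i : ℝ))⁻¹

/-- View a `Fin k`-tuple as an `ℕ`-indexed tuple. -/
def tupFun {V : Type*} {k : ℕ} (hk : 0 < k) (z : Fin k → V) : ℕ → V :=
  fun i => z ⟨i % k, Nat.mod_lt i hk⟩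

/-- The good tuple `D_j = (v_j, v_{j-1}, v_{j+1}, …, v_{j+k-2})` (0-indexed `j`, indices mod `k`). -/
def Dtup {V : Type*} (k : ℕ) (v : ℕ → V) (j : ℕ) : ℕ → V :=
  fun p => if p = 0 then v (j % k)
    else if p = 1 then v ((j + k - 1) % k)
    else v ((j + p - 1) % k)

/-!
Choose the entries of a tuple one at a time, each uniformly from a set of candidates determined by
the entries chosen before it. A tuple all of whose entries are candidates arises with probability
equal to the product of the reciprocals of the sizes of the candidate sets, so these products add
up to at most `1`. For a suitable choice of candidate sets every good tuple arises in this way, and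
its probability is its weight.
-/

lemma sum_prod_inv_card_le_one {𝕜 : Type*} [Field 𝕜] [LinearOrder 𝕜] [IsStrictOrderedRing 𝕜]
    {m : ℕ} {α : Fin m → Type*} [∀ i, Fintype (α i)] [∀ i, DecidableEq (α i)]
    (C : ∀ i, (∀ j, α j) → Finset (α i)) (hC : ∀ i, DependsOn (C i) (Set.Iio i)) :
    ∑ z with ∀ i, z i ∈ C i z, ∏ i, (#(C i z) : 𝕜)⁻¹ ≤ 1 := by
  induction m with
  | zero => simp
  | succ m ih =>
    have hC₀ : DependsOn (C 0) ∅ := (hC 0).mono (by simp)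
    obtain ⟨D, hD⟩ : ∃ D, ∀ z, C 0 z = D := by
      rcases isEmpty_or_nonempty (∀ j, α j) with _ | ⟨⟨z₀⟩⟩
      · exact ⟨∅, isEmptyElim⟩
      · exact ⟨C 0 z₀, fun z => hC₀.empty z z₀⟩
    have tail_le_one (x : α 0) : ∑ w with ∀ i, w i ∈ C (Fin.succ i) (Fin.cons x w),
        ∏ i, (#(C (Fin.succ i) (Fin.cons x w)) : 𝕜)⁻¹ ≤ 1 := by
      refine ih (fun i w => C i.succ (Fin.cons x w)) fun i w w' h => hC i.succ fun j hj => ?_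
      cases j using Fin.cases with
      | zero => rfl
      | succ j => exact h j (Fin.succ_lt_succ_iff.mp hj)
    calc ∑ z with ∀ i, z i ∈ C i z, ∏ i, (#(C i z) : 𝕜)⁻¹
      _ = ∑ x ∈ D, (#D : 𝕜)⁻¹ * ∑ w with ∀ i, w i ∈ C (Fin.succ i) (Fin.cons x w),
            ∏ i, (#(C (Fin.succ i) (Fin.cons x w)) : 𝕜)⁻¹ := by
        rw [sum_filter, ← (Fin.consEquiv α).sum_comp, Fintype.sum_prod_type]
        simp [Fin.consEquiv, Fin.forall_fin_succ, Fin.prod_univ_succ, hD, ite_and, mul_sum,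
          sum_filter, mul_comm]
      _ ≤ ∑ _ ∈ D, (#D : 𝕜)⁻¹ :=
        sum_le_sum fun x _ => mul_le_of_le_one_right (by positivity) (tail_le_one x)
      _ ≤ 1 := by simpa using mul_inv_le_one

section Induced

variable {V : Type*} {G : SimpleGraph V} {k m i : ℕ} {z z' : ℕ → V}

lemma dependsOn_isInducedPath (G : SimpleGraph V) (m : ℕ) :
    DependsOn (IsInducedPath G m) (Set.Iio m) := by
  intro y y' h
  simp only [Set.mem_Iio] at h
  simp +contextual only [IsInducedPath, h]

lemma dependsOn_isInducedCycle (G : SimpleGraph V) (k : ℕ) :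
    DependsOn (IsInducedCycle G k) (Set.Iio k) := by
  intro y y' h
  simp only [Set.mem_Iio] at h
  simp +contextual only [IsInducedCycle, h]

lemma IsInducedCycle.isInducedPath {y : ℕ → V} (h : IsInducedCycle G k y) (hm : m < k) :
    IsInducedPath G m y := by
  refine ⟨fun i hi j hj => h.1 i (hi.trans hm) j (hj.trans hm), fun i hi j hj => ?_⟩
  rw [h.2 i (hi.trans hm) j (hj.trans hm), Nat.mod_eq_of_lt (by omega), Nat.mod_eq_of_lt (by omega)]

lemma swap01_lt {p : ℕ} (hi : 2 ≤ i) (hp : p < i) : swap01 p < i := by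
  unfold swap01
  split_ifs <;> omega

lemma swap01_of_two_le (hi : 2 ≤ i) : swap01 i = i := by
  unfold swap01
  split_ifs <;> omega

lemma eqOn_extSeq (hi : 2 ≤ i) (h : Set.EqOn z z' (Set.Iio i)) (x : V) :
    Set.EqOn (extSeq z (i + 1) x) (extSeq z' (i + 1) x) (Set.Iio (i + 1)) := by
  intro p hp
  rcases Nat.lt_succ_iff_lt_or_eq.mp hp with hlt | rfl
  · simp [extSeq, hlt.ne, h (swap01_lt hi hlt)]
  · simp [extSeq]

lemma extSeq_self (hi : 2 ≤ i) (z : ℕ → V) :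
    extSeq z (i + 1) (z i) = fun p => z (swap01 p) := by
  funext p
  by_cases hp : p = i
  · simp [extSeq, hp, swap01_of_two_le hi]
  · simp [extSeq, hp]

lemma tupFun_val (hk : 0 < k) (x : Fin k → V) (i : Fin k) : tupFun hk x i = x i :=
  congrArg x (Fin.ext (Nat.mod_eq_of_lt i.isLt))

variable [Fintype V]

/-- The vertices counted by `nq G k z (i + 1)`, namely those that may follow `z 0, …, z (i - 1)` as
the entry with index `i`. Entries are indexed from `0`, the quantities `nq` from `1`. -/
noncomputable def candidates (G : SimpleGraph V) (k : ℕ) (z : ℕ → V) (i : ℕ) : Finset V :=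
  if i = 0 then univ
  else if i = 1 then univ.filter fun x => G.Adj (z 0) x
  else if i = 2 then univ.filter fun x => G.Adj (z 0) x ∧ ¬ G.Adj (z 1) x
  else if i + 1 < k then univ.filter fun x => IsInducedPath G (i + 1) (extSeq z (i + 1) x)
  else univ.filter fun x => IsInducedCycle G k (extSeq z k x)

lemma nq_succ (G : SimpleGraph V) (k : ℕ) (z : ℕ → V) (i : ℕ) :
    nq G k z (i + 1) = #(candidates G k z i) := by
  simp only [nq, candidates, Nat.card_eq_fintype_card, Fintype.card_subtype]
  split_ifs <;> simp_all

lemma wt_eq_prod_inv_card (G : SimpleGraph V) (k : ℕ) (z : ℕ → V) :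
    wt G k z = ∏ i : Fin k, (#(candidates G k z i) : ℝ)⁻¹ := by
  simp only [← nq_succ]
  rw [Fin.prod_univ_eq_prod_range (fun i => (nq G k z (i + 1) : ℝ)⁻¹) k, range_eq_Ico,
    prod_Ico_add' (fun i => (nq G k z i : ℝ)⁻¹)]
  rfl

lemma dependsOn_candidates (G : SimpleGraph V) (hi : i < k) :
    DependsOn (fun z => candidates G k z i) (Set.Iio i) := by
  intro z z' h
  simp only [candidates]
  split_ifs with h0 h1 h2 hlt
  · rfl
  · rw [h 0 (by simp; omega)]
  · rw [h 0 (by simp; omega), h 1 (by simp; omega)]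
  · simp only [dependsOn_isInducedPath G _ (eqOn_extSeq (by omega) h _)]
  · obtain rfl : k = i + 1 := by omega
    simp only [dependsOn_isInducedCycle G _ (eqOn_extSeq (by omega) h _)]

lemma dependsOn_candidates_tupFun (G : SimpleGraph V) (hk : 0 < k) (i : Fin k) :
    DependsOn (fun x => candidates G k (tupFun hk x) i) (Set.Iio i) := by
  intro x x' h
  refine dependsOn_candidates G i.isLt fun j hj => ?_
  lift j to Fin k using hj.trans i.isLt
  simpa only [tupFun_val] using h j hj

lemma IsGoodTuple.mem_candidates (h : IsGoodTuple G k z) (hk : 4 ≤ k) (hi : i < k) :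
    z i ∈ candidates G k z i := by
  have hP : IsInducedPath G 3 (fun p => z (swap01 p)) := IsInducedCycle.isInducedPath h hk
  have adj_zero_one : G.Adj (z 0) (z 1) := (hP.2 1 (by omega) 0 (by omega)).2 (.inr rfl)
  have adj_zero_two : G.Adj (z 0) (z 2) := (hP.2 1 (by omega) 2 (by omega)).2 (.inl rfl)
  have not_adj_one_two : ¬ G.Adj (z 1) (z 2) := fun hadj => by
    simpa using (hP.2 0 (by omega) 2 (by omega)).1 hadj
  unfold candidates
  split_ifs with h0 h1 h2 hlt
  · exact mem_univ _
  · subst h1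
    exact (mem_filter_univ _).2 adj_zero_one
  · subst h2
    exact (mem_filter_univ _).2 ⟨adj_zero_two, not_adj_one_two⟩
  · rw [mem_filter_univ, extSeq_self (by omega)]
    exact IsInducedCycle.isInducedPath h hlt
  · obtain rfl : k = i + 1 := by omega
    rwa [mem_filter_univ, extSeq_self (by omega)]

end Induced

theorem sum_weights_le_one_general {V : Type*} [Fintype V] (G : SimpleGraph V) (k : ℕ)
    (hk : 4 ≤ k) :
    ∑ z : Fin k → V with IsGoodTuple G k (tupFun (by omega) z), wt G k (tupFun (by omega) z)
      ≤ 1 := by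
  have hk₀ : 0 < k := by omega
  have mem_candidates_of_good (z : Fin k → V) (hz : IsGoodTuple G k (tupFun hk₀ z)) :
      ∀ i : Fin k, z i ∈ candidates G k (tupFun hk₀ z) i := fun i => by
    simpa only [tupFun_val] using hz.mem_candidates hk i.isLt
  simp only [wt_eq_prod_inv_card]
  calc ∑ z : Fin k → V with IsGoodTuple G k (tupFun hk₀ z),
        ∏ i : Fin k, (#(candidates G k (tupFun hk₀ z) i) : ℝ)⁻¹
    _ ≤ ∑ z : Fin k → V with ∀ i : Fin k, z i ∈ candidates G k (tupFun hk₀ z) i,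
          ∏ i : Fin k, (#(candidates G k (tupFun hk₀ z) i) : ℝ)⁻¹ :=
      sum_le_sum_of_subset_of_nonneg
        (monotone_filter_right univ fun z _ => mem_candidates_of_good z)
        fun _ _ _ => by positivity
    _ ≤ 1 := sum_prod_inv_card_le_one _ (dependsOn_candidates_tupFun G hk₀)

/-- Lemma 1: For a graph `G` on `n` vertices and `k ≥ 5`, the sum of the
weights `w(D)` over all good `k`-tuples `D` of vertices of `G` is at most `1`. -/
theorem sum_weights_le_one {V : Type} [Fintype V] (G : SimpleGraph V) (n k : ℕ)
    (hn : Fintype.card V = n) (hk : 5 ≤ k) :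
    ∑ z ∈ Finset.univ.filter (fun z : Fin k → V => IsGoodTuple G k (tupFun (by omega) z)),
        wt G k (tupFun (by omega) z) ≤ 1 :=
  sum_weights_le_one_general G k (by omega)
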